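/- arXiv:1711.04606 — 5 statements merged into one kernel-verified Lean document; each statement's English description precedes it below -/
import Mathlib

section
/- Suppose there are natural numbers p and r such that for every i with 1 ≤ i ≤ n one has |V_i| ≤ p, and for every i and every row configuration y : Fin n → Bool one has rank F_{i,y} ≤ r. Then for every i with 1 ≤ i ≤ n, rank F_i ≤ p · r. (This is Lemma 1 of the paper: Assumptions 1 and 2 imply that every horizontal-cut unfolding of f has rank at most p·r.) -/
/-!
Group the rows of `F_i` by the configuration `y` of the `i`-th image row.  The rows in group `y`
are exactly the rows of `F_{i,y}`, and they vanish unless `y ∈ V_i`.  Hence the row space of `F_i`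
lies in the sum over `y ∈ V_i` of the row spaces of the `F_{i,y}`, which has dimension at most
`∑ y ∈ V_i, rank F_{i,y} ≤ p * r`.
-/

/-- Assemble an image from a configuration `top` of rows `0,…,i-2` (1-based rows `1,…,i-1`),
a configuration `y` of the `i`-th row (1-based), and a configuration `bot` of the remaining
`n - i` rows. -/
def assembleRow (n i : ℕ) (top : Fin (i - 1) × Fin n → Bool) (y : Fin n → Bool)
    (bot : Fin (n - i) × Fin n → Bool) : Fin n × Fin n → Bool := fun q =>
  if h : (q.1 : ℕ) < i - 1 then top (⟨q.1, h⟩, q.2)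
  else if h2 : (q.1 : ℕ) = i - 1 then y q.2
  else bot (⟨(q.1 : ℕ) - i, by have := q.1.isLt; omega⟩, q.2)

/-- The matrix `F_{i,y}` (rows: configurations of rows `1,…,i-1`; columns: configurations of
rows `i+1,…,n`; entry: `f` of the image whose `i`-th row is `y`). -/
def Frow (n : ℕ) (f : (Fin n × Fin n → Bool) → ℝ) (i : ℕ) (y : Fin n → Bool) :
    Matrix (Fin (i - 1) × Fin n → Bool) (Fin (n - i) × Fin n → Bool) ℝ :=
  Matrix.of fun top bot => f (assembleRow n i top y bot)

/-- Assemble an image from a configuration of the first `i` rows and one of the last `n - i`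
rows. -/
def assembleCut (n i : ℕ) (top : Fin i × Fin n → Bool) (bot : Fin (n - i) × Fin n → Bool) :
    Fin n × Fin n → Bool := fun q =>
  if h : (q.1 : ℕ) < i then top (⟨q.1, h⟩, q.2)
  else bot (⟨(q.1 : ℕ) - i, by have := q.1.isLt; omega⟩, q.2)

/-- The matrix `F_i` (rows: configurations of the first `i` rows; columns: configurations of
the remaining `n - i` rows; entry: `f` of the assembled image). -/
def Fcut (n : ℕ) (f : (Fin n × Fin n → Bool) → ℝ) (i : ℕ) :
    Matrix (Fin i × Fin n → Bool) (Fin (n - i) × Fin n → Bool) ℝ :=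
  Matrix.of fun top bot => f (assembleCut n i top bot)

theorem finrank_finset_sup_le_card_mul {ι E : Type*} [AddCommGroup E] [Module ℝ E]
    [FiniteDimensional ℝ E] (s : Finset ι) (W : ι → Submodule ℝ E) (r : ℕ)
    (h : ∀ y ∈ s, Module.finrank ℝ (W y) ≤ r) :
    Module.finrank ℝ (s.sup W : Submodule ℝ E) ≤ s.card * r := by
  classical
  induction s using Finset.induction_on with
  | empty => simp
  | insert a s ha ih =>
    rw [Finset.sup_insert, Finset.card_insert_of_notMem ha, Nat.succ_mul]
    have h1 := Submodule.finrank_add_le_finrank_add_finrank (W a) (s.sup W)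
    have h2 := h a (Finset.mem_insert_self a s)
    have h3 := ih fun y hy => h y (Finset.mem_insert_of_mem hy)
    omega

/-- Splitting off the last of the first `i` rows turns a cut-assembled image into a
row-assembled one. -/
theorem assembleCut_eq_assembleRow (n i : ℕ) (h1 : 1 ≤ i) (top : Fin i × Fin n → Bool)
    (bot : Fin (n - i) × Fin n → Bool) :
    assembleCut n i top bot =
      assembleRow n i (fun q => top (⟨q.1, by have := q.1.isLt; omega⟩, q.2))
        (fun c => top (⟨i - 1, by omega⟩, c)) bot := by
  funext q
  obtain ⟨⟨a, ha⟩, c⟩ := q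
  unfold assembleCut assembleRow
  rcases lt_trichotomy a (i - 1) with h | h | h
  · have h' : a < i := by omega
    simp [h, h']
  · subst h
    have h' : i - 1 < i := by omega
    simp [h']
  · have h' : ¬ a < i := by omega
    have h2 : ¬ a < i - 1 := by omega
    have h3 : ¬ a = i - 1 := by omega
    simp [h', h2, h3]

open Classical in
/-- Lemma 1 of the paper. If `|V_i| ≤ p` for every `1 ≤ i ≤ n`
(Assumption 1) and `rank F_{i,y} ≤ r` for every such `i` and every row configuration `y`
(Assumption 2), then `rank F_i ≤ p * r` for every `1 ≤ i ≤ n`. -/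
theorem rank_Fcut_le_of_card_valid_le_of_rank_Frow_le (n : ℕ)
    (f : (Fin n × Fin n → Bool) → ℝ) (p r : ℕ)
    (hp : ∀ i (h1 : 1 ≤ i) (h2 : i ≤ n),
      (Finset.univ.filter (fun y : Fin n → Bool =>
          ∃ x : Fin n × Fin n → Bool, f x ≠ 0 ∧
            ∀ c : Fin n, x (⟨i - 1, by omega⟩, c) = y c)).card ≤ p)
    (hr : ∀ i (h1 : 1 ≤ i) (h2 : i ≤ n) (y : Fin n → Bool), (Frow n f i y).rank ≤ r) :
    ∀ i (h1 : 1 ≤ i) (h2 : i ≤ n), (Fcut n f i).rank ≤ p * r := by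
  intro i h1 h2
  set V := Finset.univ.filter (fun y : Fin n → Bool =>
    ∃ x : Fin n × Fin n → Bool, f x ≠ 0 ∧
      ∀ c : Fin n, x (⟨i - 1, by omega⟩, c) = y c) with hV
  have hle : Submodule.span ℝ (Set.range (Fcut n f i).row) ≤
      V.sup fun y => Submodule.span ℝ (Set.range (Frow n f i y).row) := by
    rw [Submodule.span_le]
    rintro _ ⟨top, rfl⟩
    set y : Fin n → Bool := fun c => top (⟨i - 1, by omega⟩, c) with hy
    by_cases hyV : y ∈ V
    · refine Finset.le_sup (f := fun y => Submodule.span ℝ (Set.range (Frow n f i y).row)) hyV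
        (Submodule.subset_span
          ⟨fun q => top (⟨q.1, by have := q.1.isLt; omega⟩, q.2), ?_⟩)
      funext bot
      exact congrArg f (assembleCut_eq_assembleRow n i h1 top bot).symm
    · -- a nonzero entry in this row would witness that `y` is a valid configuration
      have hzero : (Fcut n f i).row top = 0 := by
        funext bot
        by_contra hne
        refine hyV (Finset.mem_filter.mpr
          ⟨Finset.mem_univ _, assembleCut n i top bot, hne, fun c => ?_⟩)
        have h' : i - 1 < i := by omega
        simp [assembleCut, hy, h']
      rw [hzero]
      exact Submodule.zero_mem _
  rw [Matrix.rank_eq_finrank_span_row]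
  calc _ ≤ _ := Submodule.finrank_mono hle
    _ ≤ V.card * r := finrank_finset_sup_le_card_mul V _ r fun y _ => by
        rw [← Matrix.rank_eq_finrank_span_row]
        exact hr i h1 h2 y
    _ ≤ p * r := Nat.mul_le_mul_right r (hp i h1 h2)
end

section
/- Order the n² pixels in row-major order, indexing the pixel in row i and column j by k = (i−1)n + j, and for 1 ≤ k ≤ n² let B_k be the set of pixels with indices 1,…,k. Then for every k, writing i for the row containing pixel k (i.e., k = (i−1)n + j with 1 ≤ j ≤ n), one has rank F_{B_k} ≤ Σ_{y ∈ V_i} rank F_{i,y}. In particular, if |V_i| ≤ p for all i and rank F_{i,y} ≤ r for all i and y, then rank F_{B_k} ≤ p · r for every k. -/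
/-- Combine a configuration of the region `A` with a configuration of its complement into a
full configuration of the pixel set `P`. -/
def glue {P : Type*} [DecidableEq P] (A : Finset P) (u : {q // q ∈ A} → Bool)
    (v : {q // q ∉ A} → Bool) : P → Bool := fun q =>
  if h : q ∈ A then u ⟨q, h⟩ else v ⟨q, h⟩

/-- The unfolding matrix `F_A` of `f` along the region `A` (rows: configurations of `A`;
columns: configurations of the complement of `A`; entry: `f` of the assembled image). -/
def regionUnfold {P : Type*} [Fintype P] [DecidableEq P] (f : (P → Bool) → ℝ)
    (A : Finset P) : Matrix ({q // q ∈ A} → Bool) ({q // q ∉ A} → Bool) ℝ :=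
  Matrix.of fun u v => f (glue A u v)

/-- The region `B_k` of the pixels with (1-based) row-major indices `1,…,k`: the pixel in
(1-based) row `i` and column `j` has index `(i-1)n + j`, i.e. zero-based row-major index
`(i-1)n + (j-1) < k`. -/
def rowMajorInit (n k : ℕ) : Finset (Fin n × Fin n) :=
  Finset.univ.filter fun q => (q.1 : ℕ) * n + (q.2 : ℕ) < k

lemma matrix_rank_add_le {m n : Type*} [Fintype m] [Fintype n] (A B : Matrix m n ℝ) :
    (A + B).rank ≤ A.rank + B.rank := by
  rw [Matrix.rank, Matrix.rank, Matrix.rank, Matrix.mulVecLin_add]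
  exact (Submodule.finrank_mono (LinearMap.range_add_le _ _)).trans
    (Submodule.finrank_add_le_finrank_add_finrank _ _)

/-- Subadditivity of rank in the form used below: a matrix whose entries are a sum over `y ∈ S` of
row- and column-rescaled entries of a submatrix (possibly with repeated rows and columns) of `G y`
has rank at most the sum of the ranks of the `G y`. -/
lemma rank_le_sum_of_entries {m n m' n' Y : Type*} [Fintype m] [Fintype n] [Fintype n']
    [DecidableEq m] [DecidableEq n] (M : Matrix m n ℝ) (S : Finset Y) (G : Y → Matrix m' n' ℝ)
    (r : m → m') (c : n → n') (a : Y → m → ℝ) (b : Y → n → ℝ)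
    (h : ∀ u v, M u v = ∑ y ∈ S, a y u * G y (r u) (c v) * b y v) :
    M.rank ≤ ∑ y ∈ S, (G y).rank := by
  have hM : M = ∑ y ∈ S, Matrix.diagonal (a y) * (G y).submatrix r c * Matrix.diagonal (b y) := by
    ext u v
    simp [h, Matrix.sum_apply]
  rw [hM]
  refine (Finset.le_sum_of_subadditive Matrix.rank (by simp) matrix_rank_add_le S _).trans
    (Finset.sum_le_sum fun y _ => ?_)
  exact (Matrix.rank_mul_le_left _ _).trans
    ((Matrix.rank_mul_le_right _ _).trans (Matrix.rank_submatrix_le _ _ _))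

/-- The only properties of the region `B_k` that matter: it contains every row above the row `i`
of pixel `k`, and no pixel of a row below it. -/
lemma mem_rowMajorInit_iff_of_ne {n i j : ℕ} (hi1 : 1 ≤ i) (hj1 : 1 ≤ j) (hj2 : j ≤ n)
    (q : Fin n × Fin n) (hq : (q.1 : ℕ) ≠ i - 1) :
    q ∈ rowMajorInit n ((i - 1) * n + j) ↔ (q.1 : ℕ) < i - 1 := by
  have h2 := q.2.isLt
  simp only [rowMajorInit, Finset.mem_filter, Finset.mem_univ, true_and]
  constructor
  · intro h
    by_contra hlt
    have : (i - 1 + 1) * n ≤ (q.1 : ℕ) * n := Nat.mul_le_mul_right n (by omega)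
    rw [Nat.add_mul] at this
    omega
  · intro h
    have : ((q.1 : ℕ) + 1) * n ≤ (i - 1) * n := Nat.mul_le_mul_right n (by omega)
    rw [Nat.add_mul] at this
    omega

open Classical in
/-- The rank bound for any region `A` that contains all rows before row `i` and no pixel of a row
after it; `A` may meet row `i` in an arbitrary set of pixels. -/
lemma rank_regionUnfold_le (n : ℕ) (f : (Fin n × Fin n → Bool) → ℝ) (i : ℕ) (hi1 : 1 ≤ i)
    (hi2 : i - 1 < n) (A : Finset (Fin n × Fin n))
    (hA : ∀ q : Fin n × Fin n, (q.1 : ℕ) ≠ i - 1 → (q ∈ A ↔ (q.1 : ℕ) < i - 1)) :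
    (regionUnfold f A).rank ≤
      ∑ y ∈ Finset.univ.filter (fun y : Fin n → Bool =>
          ∃ x : Fin n × Fin n → Bool, f x ≠ 0 ∧
            ∀ c : Fin n, x (⟨i - 1, hi2⟩, c) = y c),
        (Frow n f i y).rank := by
  -- Configurations of `A` and of its complement are restricted to the rows above and below row `i`
  -- by gluing with a constant, whose values are never read there.
  refine rank_le_sum_of_entries _ _ (Frow n f i)
    (fun u q => glue A u (fun _ => false) (⟨q.1, by omega⟩, q.2))
    (fun v q => glue A (fun _ => false) v (⟨q.1 + i, by omega⟩, q.2))
    (fun y u => if ∀ q : {q // q ∈ A}, (q.1.1 : ℕ) = i - 1 → u q = y q.1.2 then 1 else 0)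
    (fun y v => if ∀ q : {q // q ∉ A}, (q.1.1 : ℕ) = i - 1 → v q = y q.1.2 then 1 else 0) ?_
  intro u v
  set y₀ : Fin n → Bool := fun c => glue A u v (⟨i - 1, hi2⟩, c) with hy₀
  have key : assembleRow n i
      (fun q => glue A u (fun _ => false) (⟨q.1, by omega⟩, q.2)) y₀
      (fun q => glue A (fun _ => false) v (⟨q.1 + i, by omega⟩, q.2)) = glue A u v := by
    funext q
    obtain ⟨⟨a, ha⟩, b⟩ := q
    by_cases h1 : a < i - 1
    · have hm : ((⟨a, ha⟩, b) : Fin n × Fin n) ∈ A := (hA _ (by simp; omega)).2 h1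
      simp [assembleRow, h1, glue, hm]
    · by_cases h2 : a = i - 1
      · subst h2
        simp [assembleRow, hy₀]
      · have hm : ((⟨a, ha⟩, b) : Fin n × Fin n) ∉ A := fun h => h1 ((hA _ h2).1 h)
        have h3 : a - i + i = a := by omega
        simp [assembleRow, h1, h2, glue, hm, h3]
  -- Only the actual `i`-th row `y₀` of the assembled image contributes to the sum.
  rw [Finset.sum_eq_single y₀]
  · rw [if_pos, if_pos, one_mul, mul_one]
    · simp only [regionUnfold, Frow, Matrix.of_apply, key]
    · rintro ⟨⟨⟨a, ha⟩, b⟩, hq⟩ h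
      simp only at h
      subst h
      simp [hy₀, glue, hq]
    · rintro ⟨⟨⟨a, ha⟩, b⟩, hq⟩ h
      simp only at h
      subst h
      simp [hy₀, glue, hq]
  · intro y _ hne
    by_contra hz
    apply hne
    have hu := left_ne_zero_of_mul (left_ne_zero_of_mul hz)
    have hv := right_ne_zero_of_mul hz
    simp only [ne_eq, ite_eq_right_iff, one_ne_zero, imp_false, not_not] at hu hv
    funext c
    simp only [hy₀, glue]
    split_ifs with hc
    · exact (hu ⟨_, hc⟩ rfl).symm
    · exact (hv ⟨_, hc⟩ rfl).symm
  · intro hy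
    have hf : f (glue A u v) = 0 := by
      by_contra hf
      exact hy (Finset.mem_filter.2 ⟨Finset.mem_univ _, glue A u v, hf, fun _ => rfl⟩)
    simp only [Frow, Matrix.of_apply, key, hf, mul_zero, zero_mul]

open Classical in
/-- For every pixel index `k = (i-1)n + j` (with `1 ≤ i, j ≤ n`), the rank of
the unfolding `F_{B_k}` along the region `B_k` of the first `k` pixels in row-major order is at
most `∑_{y ∈ V_i} rank F_{i,y}`; in particular, if `|V_i| ≤ p` for all `i` and
`rank F_{i,y} ≤ r` for all `i, y`, then `rank F_{B_k} ≤ p * r` for every `k`. -/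
theorem rank_rowMajorInit_unfold_le (n : ℕ) (f : (Fin n × Fin n → Bool) → ℝ) :
    (∀ i j (hi1 : 1 ≤ i) (hi2 : i ≤ n) (hj1 : 1 ≤ j) (hj2 : j ≤ n),
      (regionUnfold f (rowMajorInit n ((i - 1) * n + j))).rank ≤
        ∑ y ∈ Finset.univ.filter (fun y : Fin n → Bool =>
            ∃ x : Fin n × Fin n → Bool, f x ≠ 0 ∧
              ∀ c : Fin n, x (⟨i - 1, by omega⟩, c) = y c),
          (Frow n f i y).rank) ∧
    (∀ p r : ℕ,
      (∀ i (hi1 : 1 ≤ i) (hi2 : i ≤ n),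
        (Finset.univ.filter (fun y : Fin n → Bool =>
            ∃ x : Fin n × Fin n → Bool, f x ≠ 0 ∧
              ∀ c : Fin n, x (⟨i - 1, by omega⟩, c) = y c)).card ≤ p) →
      (∀ i (hi1 : 1 ≤ i) (hi2 : i ≤ n) (y : Fin n → Bool), (Frow n f i y).rank ≤ r) →
      ∀ i j (hi1 : 1 ≤ i) (hi2 : i ≤ n) (hj1 : 1 ≤ j) (hj2 : j ≤ n),
        (regionUnfold f (rowMajorInit n ((i - 1) * n + j))).rank ≤ p * r) := by
  have main : ∀ i j (hi1 : 1 ≤ i) (hi2 : i ≤ n) (hj1 : 1 ≤ j) (hj2 : j ≤ n),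
      (regionUnfold f (rowMajorInit n ((i - 1) * n + j))).rank ≤
        ∑ y ∈ Finset.univ.filter (fun y : Fin n → Bool =>
            ∃ x : Fin n × Fin n → Bool, f x ≠ 0 ∧
              ∀ c : Fin n, x (⟨i - 1, by omega⟩, c) = y c),
          (Frow n f i y).rank := fun i j hi1 hi2 hj1 hj2 =>
    rank_regionUnfold_le n f i hi1 (by omega) _ (mem_rowMajorInit_iff_of_ne hi1 hj1 hj2)
  refine ⟨main, fun p r hp hr i j hi1 hi2 hj1 hj2 => (main i j hi1 hi2 hj1 hj2).trans ?_⟩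
  refine (Finset.sum_le_card_nsmul _ _ r fun y _ => hr i hi1 hi2 y).trans ?_
  rw [smul_eq_mul]
  exact Nat.mul_le_mul_right r (hp i hi1 hi2)
end

section
/- Let N ≥ 1 and let f : (Fin N → Bool) → ℝ be not identically zero. For 0 ≤ k ≤ N let F^{(k)} be the unfolding matrix of f whose rows are indexed by the first k coordinates (functions Fin k → Bool) and whose columns are indexed by the last N−k coordinates, with entry f of the concatenated bit string, and let r_k = rank F^{(k)} (so r_0 = r_N = 1). Then there exist matrices M_{k,b} ∈ ℝ^{r_{k−1} × r_k} for each 1 ≤ k ≤ N and b ∈ Bool, such that for every y : Fin N → Bool, f(y) equals the unique entry of the 1×1 matrix product M_{1,y_1} M_{2,y_2} ⋯ M_{N,y_N}. (Exact tensor train / matrix product representation with bond dimensions equal to the unfolding ranks.) -/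
/-!
For each `k` choose a rank factorization `F⁽ᵏ⁾ = A_k B_k` with `B_k` right invertible, say
`B_k C_k = 1`, so that `A_k = F⁽ᵏ⁾ C_k`. Moving one bit `b` from the columns to the rows gives
`F⁽ᵏ⁺¹⁾((u, b), v) = F⁽ᵏ⁾(u, (b, v)) = ∑ i, A_k(u, i) B_k(i, (b, v))`, and multiplying by `C_{k+1}`
on the right yields the recursion `A_{k+1}((u, b), ·) = A_k(u, ·) M_{k,b}` with
`M_{k,b} = B_k(·, (b, ·)) C_{k+1}`. The product of the `M_{k,y_k}` therefore telescopes to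
`A_N(y, ·)`, once the factorizations are normalized by `A_0 = (1)` and `B_N = (1)`; then
`A_N(y, ·) = F⁽ᴺ⁾(y, ·) = f y`. The two normalizations concern different indices as `N ≥ 1`, and
are possible because `F⁽⁰⁾` is a single nonzero row and `F⁽ᴺ⁾` a single nonzero column.
-/

/-- The `k`-th unfolding matrix `F^{(k)}` of a function `f` of `N` Boolean variables (rows:
the first `k` coordinates; columns: the last `N - k` coordinates; entry: `f` of the
concatenated bit string). -/
def unfoldTT (N : ℕ) (f : (Fin N → Bool) → ℝ) (k : ℕ) :
    Matrix (Fin k → Bool) (Fin (N - k) → Bool) ℝ :=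
  Matrix.of fun u v => f fun t =>
    if h : (t : ℕ) < k then u ⟨t, h⟩ else v ⟨(t : ℕ) - k, by have := t.isLt; omega⟩

/-- The matrix product `M_{1,y_1} M_{2,y_2} ⋯ M_{N,y_N}` of a tensor train (matrix product)
representation with bond dimensions `l`, evaluated on the bit string `y`. -/
noncomputable def ttProd (l : ℕ → ℕ)
    (M : (k : ℕ) → Bool → Matrix (Fin (l k)) (Fin (l (k + 1))) ℝ) :
    (N : ℕ) → (Fin N → Bool) → Matrix (Fin (l 0)) (Fin (l N)) ℝ
  | 0, _ => 1
  | N + 1, y => ttProd l M N (fun t => y t.castSucc) * M N (y (Fin.last N))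

open Matrix

/-- Rank factorization: the columns of `A` form a basis of the column space of `F`, and `B` holds
the coordinates of the columns of `F` in that basis. The columns of `C` are preimages under `F` of
the basis vectors. -/
lemma exists_rank_factorization {m n : Type*} [Fintype n] [Finite m] [DecidableEq n]
    (F : Matrix m n ℝ) :
    ∃ (A : Matrix m (Fin F.rank) ℝ) (B : Matrix (Fin F.rank) n ℝ) (C : Matrix n (Fin F.rank) ℝ),
      F = A * B ∧ B * C = 1 := by
  let b : Module.Basis (Fin F.rank) ℝ (LinearMap.range F.mulVecLin) :=
    Module.finBasisOfFinrankEq ℝ _ rfl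
  let L : (n → ℝ) →ₗ[ℝ] (Fin F.rank → ℝ) := b.equivFun.toLinearMap ∘ₗ F.mulVecLin.rangeRestrict
  have hc : ∀ i, ∃ c : n → ℝ, F.mulVecLin.rangeRestrict c = b i := fun i =>
    F.mulVecLin.surjective_rangeRestrict (b i)
  choose c hc using hc
  refine ⟨of fun u i => (b i : m → ℝ) u, LinearMap.toMatrix' L, of fun v i => c i v, ?_, ?_⟩
  · ext u v
    have h := b.sum_equivFun (F.mulVecLin.rangeRestrict (Pi.single v 1))
    have h2 : ∑ i, b.equivFun (F.mulVecLin.rangeRestrict (Pi.single v 1)) i * (b i : m → ℝ) u =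
        (F *ᵥ Pi.single v 1) u := by
      simpa [-Module.Basis.sum_repr] using congrFun (congrArg Subtype.val h) u
    rw [Matrix.mulVec_single_one, Matrix.col_apply] at h2
    rw [← h2, Matrix.mul_apply]
    refine Finset.sum_congr rfl fun i _ => ?_
    rw [mul_comm]
    simp [L, LinearMap.toMatrix'_apply]
  · ext i j
    have h : (LinearMap.toMatrix' L) *ᵥ (c j) = L (c j) := LinearMap.toMatrix'_mulVec L (c j)
    have h2 : L (c j) i = (1 : Matrix (Fin F.rank) (Fin F.rank) ℝ) i j := by
      simp [L, hc, Matrix.one_apply, eq_comm]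
    rw [← h2, ← h]
    rfl

lemma eq_zero_of_rank_eq_zero {m n : Type*} [Fintype n] [Finite m] [DecidableEq n]
    (F : Matrix m n ℝ) (h : F.rank = 0) : F = 0 := by
  obtain ⟨A, B, -, hF, -⟩ := exists_rank_factorization F
  have : IsEmpty (Fin F.rank) := by rw [h]; infer_instance
  refine hF.trans ?_
  ext i j
  simp [Matrix.mul_apply]

/-- The bit string `b, v_1, v_2, …`, with the length written as `N - k` to match the columns of
`unfoldTT N f k`. -/
def consBit (N k : ℕ) (b : Bool) (v : Fin (N - (k + 1)) → Bool) : Fin (N - k) → Bool :=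
  fun t => if h : (t : ℕ) = 0 then b else v ⟨(t : ℕ) - 1, by have := t.isLt; omega⟩

lemma unfoldTT_succ (N : ℕ) (f : (Fin N → Bool) → ℝ) (k : ℕ) (u : Fin (k + 1) → Bool)
    (v : Fin (N - (k + 1)) → Bool) :
    unfoldTT N f (k + 1) u v =
      unfoldTT N f k (fun t => u t.castSucc) (consBit N k (u (Fin.last k)) v) := by
  simp only [unfoldTT, of_apply, consBit]
  congr 1
  funext t
  rcases lt_trichotomy (t : ℕ) k with h | h | h
  · have h' : (t : ℕ) < k + 1 := by omega
    simp [h, h']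
  · simp only [dif_pos, h, lt_irrefl, dif_neg, not_false_eq_true, Nat.sub_self]
    simp [Fin.last]
  · have h1 : ¬ (t : ℕ) < k + 1 := by omega
    have h2 : ¬ (t : ℕ) < k := by omega
    have h3 : ¬ (t : ℕ) - k = 0 := by omega
    simp only [h1, h2, h3, dif_neg, not_false_eq_true]
    congr 1

/-- The single row `F⁽⁰⁾` is nonzero, so `F⁽⁰⁾ = (1) F⁽⁰⁾` is a rank factorization. -/
lemma exists_factorization_zero (N : ℕ) (f : (Fin N → Bool) → ℝ) (hf : f ≠ 0) :
    ∃ (B : Matrix (Fin (unfoldTT N f 0).rank) (Fin (N - 0) → Bool) ℝ)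
      (C : Matrix (Fin (N - 0) → Bool) (Fin (unfoldTT N f 0).rank) ℝ),
      unfoldTT N f 0 =
        (of fun _ _ => 1 : Matrix (Fin 0 → Bool) (Fin (unfoldTT N f 0).rank) ℝ) * B ∧
      B * C = 1 := by
  obtain ⟨y, hy⟩ := Function.ne_iff.mp hf
  have hne : unfoldTT N f 0 ≠ 0 := fun h => hy (by
    have := congrFun (congrFun h Fin.elim0) (fun t => y ⟨t, by have := t.isLt; omega⟩)
    simpa [unfoldTT] using this)
  have hr : (unfoldTT N f 0).rank = 1 := by
    have h1 := (unfoldTT N f 0).rank_le_card_height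
    have h2 : (unfoldTT N f 0).rank ≠ 0 := fun h => hne (eq_zero_of_rank_eq_zero _ h)
    simp at h1
    omega
  have hentry : ∃ v, unfoldTT N f 0 Fin.elim0 v ≠ 0 := by
    by_contra! h
    exact hne (by ext u v; rw [Subsingleton.elim u Fin.elim0]; exact h v)
  obtain ⟨v₀, hv₀⟩ := hentry
  generalize unfoldTT N f 0 = F at *
  generalize F.rank = r at *
  subst hr
  refine ⟨of fun _ v => F Fin.elim0 v,
    of fun v _ => if v = v₀ then (F Fin.elim0 v₀)⁻¹ else 0, ?_, ?_⟩
  · ext u v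
    rw [Subsingleton.elim u Fin.elim0]
    simp [Matrix.mul_apply]
  · ext i j
    rw [Subsingleton.elim i j]
    simp [Matrix.mul_apply, hv₀]

/-- The single column `F⁽ᴺ⁾` is nonzero, so `F⁽ᴺ⁾ = F⁽ᴺ⁾ (1)` is a rank factorization. -/
lemma exists_factorization_last (N : ℕ) (f : (Fin N → Bool) → ℝ) (hf : f ≠ 0) :
    ∃ C : Matrix (Fin (N - N) → Bool) (Fin (unfoldTT N f N).rank) ℝ,
      unfoldTT N f N =
        (of fun y _ => f y : Matrix (Fin N → Bool) (Fin (unfoldTT N f N).rank) ℝ) *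
          (of fun _ _ => 1 : Matrix (Fin (unfoldTT N f N).rank) (Fin (N - N) → Bool) ℝ) ∧
      (of fun _ _ => 1 : Matrix (Fin (unfoldTT N f N).rank) (Fin (N - N) → Bool) ℝ) * C = 1 := by
  have hF : unfoldTT N f N = of fun y _ => f y := by
    ext y v
    simp [unfoldTT]
  obtain ⟨y, hy⟩ := Function.ne_iff.mp hf
  have : IsEmpty (Fin (N - N)) := by rw [Nat.sub_self]; infer_instance
  have hr : (unfoldTT N f N).rank = 1 := by
    have h1 := (unfoldTT N f N).rank_le_card_width
    have h2 : (unfoldTT N f N).rank ≠ 0 := fun h => hy (by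
      have := congrFun (congrFun (eq_zero_of_rank_eq_zero _ h) y) (fun _ => false)
      simpa [hF] using this)
    simp at h1
    omega
  generalize (unfoldTT N f N).rank = r at *
  subst hr
  refine ⟨of fun _ _ => 1, ?_, ?_⟩
  · rw [hF]
    ext u v
    simp [Matrix.mul_apply]
  · ext i j
    rw [Subsingleton.elim i j]
    simp [Matrix.mul_apply]

/-- Every `f : (Fin N → Bool) → ℝ` that is not identically zero admits an
exact tensor train (matrix product) representation whose bond dimensions are the ranks
`r_k = rank F^{(k)}` of its unfolding matrices: there are matrices `M_{k,b} : ℝ^{r_{k-1} × r_k}`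
with `f y = M_{1,y_1} M_{2,y_2} ⋯ M_{N,y_N}` (a `1 × 1` matrix, as `r_0 = r_N = 1`). -/
theorem exists_tensorTrain_rank_bonds (N : ℕ) (hN : 1 ≤ N) (f : (Fin N → Bool) → ℝ)
    (hf : f ≠ 0) :
    ∃ M : (k : ℕ) → Bool →
        Matrix (Fin ((unfoldTT N f k).rank)) (Fin ((unfoldTT N f (k + 1)).rank)) ℝ,
      ∀ y : Fin N → Bool,
        ttProd (fun k => (unfoldTT N f k).rank) M N y = Matrix.of fun _ _ => f y := by
  have key : ∀ k, ∃ (A : Matrix (Fin k → Bool) (Fin (unfoldTT N f k).rank) ℝ)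
      (B : Matrix (Fin (unfoldTT N f k).rank) (Fin (N - k) → Bool) ℝ)
      (C : Matrix (Fin (N - k) → Bool) (Fin (unfoldTT N f k).rank) ℝ),
      unfoldTT N f k = A * B ∧ B * C = 1 ∧ (k = 0 → A = of fun _ _ => 1) ∧
        (k = N → B = of fun _ _ => 1) := by
    intro k
    by_cases h0 : k = 0
    · subst h0
      obtain ⟨B, C, h1, h2⟩ := exists_factorization_zero N f hf
      exact ⟨_, B, C, h1, h2, fun _ => rfl, fun h => by omega⟩
    by_cases hk : k = N
    · subst hk
      obtain ⟨C, h1, h2⟩ := exists_factorization_last k f hf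
      exact ⟨_, _, C, h1, h2, fun h => absurd h h0, fun _ => rfl⟩
    · obtain ⟨A, B, C, h1, h2⟩ := exists_rank_factorization (unfoldTT N f k)
      exact ⟨A, B, C, h1, h2, fun h => absurd h h0, fun h => absurd h hk⟩
  choose A B C hAB hBC hA0 hBN using key
  have hA : ∀ k, A k = unfoldTT N f k * C k := fun k => by
    -- the type of `C k` mentions `unfoldTT N f k`, so `hAB` enters through `congrArg`
    have h := congrArg (· * C k) (hAB k)
    simp only [Matrix.mul_assoc, hBC, Matrix.mul_one] at h
    exact h.symm
  refine ⟨fun k b => (of fun i v => B k i (consBit N k b v)) * C (k + 1), fun y => ?_⟩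
  have hrec : ∀ k (u : Fin k → Bool), ttProd (fun k => (unfoldTT N f k).rank)
      (fun k b => (of fun i v => B k i (consBit N k b v)) * C (k + 1)) k u =
        of fun _ j => A k u j := by
    intro k
    induction k with
    | zero =>
      intro u
      -- `r_0 ≤ 1`, so the identity matrix is the all-ones matrix
      have hr : (unfoldTT N f 0).rank ≤ 1 := by
        simpa using (unfoldTT N f 0).rank_le_card_height
      ext i j
      have hij : i = j := Fin.ext (by have := i.isLt; have := j.isLt; omega)
      subst hij
      simp [ttProd, hA0 0 rfl]
    | succ k ih =>
      intro u
      rw [ttProd, ih, ← Matrix.mul_assoc]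
      ext i j
      rw [of_apply, hA (k + 1), Matrix.mul_apply, Matrix.mul_apply]
      refine Finset.sum_congr rfl fun v _ => ?_
      rw [unfoldTT_succ]
      exact congrArg (· * C (k + 1) v j) (congrFun (congrFun (hAB k) _) _).symm
  rw [hrec]
  ext i j
  have hr : (unfoldTT N f N).rank ≤ 1 := by
    simpa using (unfoldTT N f N).rank_le_card_width
  have : Subsingleton (Fin (unfoldTT N f N).rank) := Fin.subsingleton_iff_le_one.mpr hr
  have h := congrFun (congrFun (hAB N) y) (fun _ => false)
  rw [Matrix.mul_apply, Fintype.sum_subsingleton _ j, hBN N rfl] at h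
  simp only [unfoldTT, of_apply, Fin.is_lt, dif_pos] at h
  exact (h.trans (mul_one _)).symm
end

section
/- Suppose f is not identically zero, and suppose there are natural numbers p and r such that |V_i| ≤ p for every i with 1 ≤ i ≤ n and rank F_{i,y} ≤ r for every i and every row configuration y : Fin n → Bool. Then f, viewed as a function of its n² pixels listed in row-major order, admits an exact tensor train representation whose bond dimensions satisfy l_0 = l_{n²} = 1 and l_k ≤ p · r for all 1 ≤ k ≤ n²−1: there exist matrices M_{k,b} ∈ ℝ^{l_{k−1} × l_k} for 1 ≤ k ≤ n² and b ∈ Bool such that for every image x, f(x) equals the scalar M_{1,x_1} M_{2,x_2} ⋯ M_{n²,x_{n²}}, where x_k is the value of the k-th pixel in row-major order. (This is Theorem 2 of the paper: Assumptions 1 and 2 imply an exact tensor train representation with polynomially bounded matrix dimension.) -/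
/-- The pixels of an `n × n` image listed in row-major order: the pixel with zero-based
row-major index `k` is the one in row `k / n` and column `k % n` (zero-based). -/
def rowMajor (n : ℕ) (x : Fin n × Fin n → Bool) : Fin (n * n) → Bool := fun k =>
  x (⟨(k : ℕ) / n, Nat.div_lt_of_lt_mul k.isLt⟩,
     ⟨(k : ℕ) % n, Nat.mod_lt _ (Nat.pos_of_ne_zero fun h => by
        subst h; exact absurd k.isLt (by simp))⟩)

/-- The bit string that agrees with `a` on the first `k` positions and with `b` afterwards. -/
def joinAt (k : ℕ) (a b : ℕ → Bool) : ℕ → Bool := fun t => if t < k then a t else b t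

/-- The image whose row-major pixel list is an initial segment of the infinite bit string `z`. -/
def toImage (n : ℕ) (z : ℕ → Bool) : Fin n × Fin n → Bool := fun q => z (q.1 * n + q.2)

/-- The span of the functions obtained from `G` by fixing the first `k` bits. They are kept as
functions of a full bit string, constant in the fixed bits. -/
def cutSpace (G : (ℕ → Bool) → ℝ) (k : ℕ) : Submodule ℝ ((ℕ → Bool) → ℝ) :=
  Submodule.span ℝ (Set.range fun a b => G (joinAt k a b))

/-- Fixing the bit in position `k` to `c`, as a linear map on functions of bit strings. -/
def fixBit (k : ℕ) (c : Bool) : ((ℕ → Bool) → ℝ) →ₗ[ℝ] ((ℕ → Bool) → ℝ) :=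
  LinearMap.funLeft ℝ ℝ fun b => Function.update b k c

lemma fixBit_mem_cutSpace (G : (ℕ → Bool) → ℝ) (k : ℕ) (c : Bool) {φ : (ℕ → Bool) → ℝ}
    (hφ : φ ∈ cutSpace G k) : fixBit k c φ ∈ cutSpace G (k + 1) := by
  have h : cutSpace G k ≤ (cutSpace G (k + 1)).comap (fixBit k c) := by
    refine Submodule.span_le.2 ?_
    rintro _ ⟨a, rfl⟩
    refine Submodule.subset_span ⟨Function.update a k c, ?_⟩
    funext b
    change G _ = G _
    congr 1
    funext t
    simp only [joinAt, Function.update_apply]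
    grind
  exact h hφ

lemma finrank_finset_sup_le_sum {ι V : Type*} [AddCommGroup V] [Module ℝ V]
    (s : Finset ι) (U : ι → Submodule ℝ V) [∀ i, FiniteDimensional ℝ (U i)] :
    Module.finrank ℝ (s.sup U : Submodule ℝ V) ≤ ∑ i ∈ s, Module.finrank ℝ (U i) := by
  classical
  induction s using Finset.induction_on with
  | empty => simp
  | insert a s ha ih =>
    rw [Finset.sup_insert, Finset.sum_insert ha]
    exact (Submodule.finrank_add_le_finrank_add_finrank _ _).trans (by omega)

/-- The linear map turning a function of the rows below row `i` (1-based) into a function of bit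
strings, supported on the strings agreeing with `y` on the part of row `i` beyond the first `k`
pixels. -/
noncomputable def liftBelow (n k i : ℕ) (y : Fin n → Bool) :
    ((Fin (n - i) × Fin n → Bool) → ℝ) →ₗ[ℝ] ((ℕ → Bool) → ℝ) :=
  open Classical in
  { toFun := fun φ b =>
      if ∀ j : Fin n, ¬ (i - 1) * n + j < k → b ((i - 1) * n + j) = y j then
        φ fun q => b ((q.1 + i) * n + q.2) else 0
    map_add' := fun φ ψ => by
      funext b
      simp only [Pi.add_apply]
      split_ifs <;> simp
    map_smul' := fun c φ => by
      funext b
      simp only [Pi.smul_apply, RingHom.id_apply]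
      split_ifs <;> simp }

open Classical in
/-- If the cut after `k` pixels meets row `i` (1-based), then the space of the cut is contained in
the sum, over the possible contents `y` of row `i`, of the lifted row spaces of `F_{i,y}`. -/
lemma cutSpace_le_sup (n : ℕ) (f : (Fin n × Fin n → Bool) → ℝ) (k i : ℕ) (h1 : 1 ≤ i)
    (hk1 : (i - 1) * n ≤ k) (hk2 : k ≤ i * n) (V : Finset (Fin n → Bool))
    (hV : ∀ z, f (toImage n z) ≠ 0 → (fun j : Fin n => z ((i - 1) * n + j)) ∈ V) :
    cutSpace (fun z => f (toImage n z)) k ≤ V.sup fun y =>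
      (Submodule.span ℝ (Set.range (Frow n f i y).row)).map (liftBelow n k i y) := by
  refine Submodule.span_le.2 ?_
  rintro _ ⟨a, rfl⟩
  have key : (fun b => f (toImage n (joinAt k a b))) = ∑ y ∈ V,
      if ∀ j : Fin n, (i - 1) * n + j < k → a ((i - 1) * n + j) = y j then
        liftBelow n k i y ((Frow n f i y).row fun q => a (q.1 * n + q.2)) else 0 := by
    funext b
    -- the content of row `i`, the only index with a nonzero summand at `b`
    set y₀ : Fin n → Bool := fun j => joinAt k a b ((i - 1) * n + j) with hy₀
    have himg : assembleRow n i (fun q => a (q.1 * n + q.2)) y₀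
        (fun q => b ((q.1 + i) * n + q.2)) = toImage n (joinAt k a b) := by
      funext q
      obtain ⟨s, j⟩ := q
      have hj := j.isLt
      simp only [assembleRow, toImage]
      split_ifs with h h'
      · have : (s : ℕ) * n + n ≤ (i - 1) * n := by
          have := Nat.mul_le_mul_right n (show (s : ℕ) + 1 ≤ i - 1 by omega)
          linarith
        simp only [joinAt]
        rw [if_pos (by omega)]
      · rw [hy₀, h']
      · have : i * n ≤ (s : ℕ) * n := Nat.mul_le_mul_right n (by omega)
        simp only [joinAt]
        rw [if_neg (by omega), Nat.sub_add_cancel (by omega)]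
    have hterm : ∀ y : Fin n → Bool,
        (if ∀ j : Fin n, (i - 1) * n + j < k → a ((i - 1) * n + j) = y j then
          liftBelow n k i y ((Frow n f i y).row fun q => a (q.1 * n + q.2)) else 0) b
        = if y₀ = y then f (toImage n (joinAt k a b)) else 0 := by
      intro y
      by_cases hy : y₀ = y
      · rw [if_pos hy, if_pos, ← himg]
        · simp only [liftBelow, LinearMap.coe_mk, AddHom.coe_mk]
          rw [if_pos]
          · simp [Frow, Matrix.row, hy]
          · intro j hj
            rw [← hy]
            simp [hy₀, joinAt, hj]
        · intro j hj
          rw [← hy]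
          simp [hy₀, joinAt, hj]
      · rw [if_neg hy]
        split_ifs with hA
        · simp only [liftBelow, LinearMap.coe_mk, AddHom.coe_mk]
          rw [if_neg]
          intro hB
          apply hy
          funext j
          simp only [hy₀, joinAt]
          split_ifs with hj
          · exact hA j hj
          · exact hB j hj
        · rfl
    rw [Finset.sum_apply, Finset.sum_congr rfl fun y _ => hterm y, Finset.sum_ite_eq]
    split_ifs with hmem
    · rfl
    · by_contra hne
      exact hmem (hV _ hne)
  change (fun b => f (toImage n (joinAt k a b))) ∈ _
  rw [key]
  refine Submodule.sum_mem _ fun y hy => ?_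
  split_ifs
  · refine Finset.le_sup (f := fun y =>
      (Submodule.span ℝ (Set.range (Frow n f i y).row)).map (liftBelow n k i y)) hy ?_
    exact Submodule.mem_map_of_mem (Submodule.subset_span ⟨_, rfl⟩)
  · exact Submodule.zero_mem _

open Classical in
/-- The dimension bound `p * r` at a cut meeting row `i` (1-based). -/
lemma finrank_cutSpace_le (n : ℕ) (f : (Fin n × Fin n → Bool) → ℝ) (k i p r : ℕ) (h1 : 1 ≤ i)
    (hk1 : (i - 1) * n ≤ k) (hk2 : k ≤ i * n) (V : Finset (Fin n → Bool))
    (hV : ∀ z, f (toImage n z) ≠ 0 → (fun j : Fin n => z ((i - 1) * n + j)) ∈ V)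
    (hp : V.card ≤ p) (hr : ∀ y, (Frow n f i y).rank ≤ r) :
    FiniteDimensional ℝ (cutSpace (fun z => f (toImage n z)) k) ∧
      Module.finrank ℝ (cutSpace (fun z => f (toImage n z)) k) ≤ p * r := by
  have hle := cutSpace_le_sup n f k i h1 hk1 hk2 V hV
  refine ⟨Submodule.finiteDimensional_of_le hle, ?_⟩
  refine (Submodule.finrank_mono hle).trans ((finrank_finset_sup_le_sum _ _).trans ?_)
  refine (Finset.sum_le_card_nsmul _ _ r fun y _ => ?_).trans ?_
  · refine (Submodule.finrank_map_le _ _).trans ?_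
    rw [← Matrix.rank_eq_finrank_span_row]
    exact hr y
  · simpa using Nat.mul_le_mul_right r hp

/-- If the matrices `M` express the fixing of successive bits in terms of families `B k` starting
at `G`, then the tensor train product gives the coefficients of the partial evaluations of `G`. -/
lemma sum_ttProd_mul (G : (ℕ → Bool) → ℝ) (N : ℕ) (l : ℕ → ℕ)
    (B : (k : ℕ) → Fin (l k) → (ℕ → Bool) → ℝ) (hB0 : ∀ i, B 0 i = G)
    (M : (k : ℕ) → Bool → Matrix (Fin (l k)) (Fin (l (k + 1))) ℝ)
    (hM : ∀ k c, k < N → ∀ i, ∑ j, M k c i j • B (k + 1) j = fixBit k c (B k i)) :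
    ∀ K, K ≤ N → ∀ (y : Fin K → Bool) (i : Fin (l 0)) (b : ℕ → Bool),
      ∑ j, ttProd l M K y i j * B K j b = G fun t => if h : t < K then y ⟨t, h⟩ else b t := by
  intro K
  induction K with
  | zero =>
    intro _ y i b
    simp [ttProd, Matrix.one_apply, hB0]
  | succ K ih =>
    intro hK y i b
    have hstep : ∀ j, ∑ m, M K (y (Fin.last K)) j m * B (K + 1) m b
        = B K j (Function.update b K (y (Fin.last K))) := by
      intro j
      have := congrFun (hM K (y (Fin.last K)) (by omega) j) b
      simpa [fixBit, LinearMap.funLeft] using this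
    simp only [ttProd, Matrix.mul_apply, Finset.sum_mul]
    rw [Finset.sum_comm]
    simp only [mul_assoc, ← Finset.mul_sum, hstep]
    rw [ih (by omega)]
    congr 1
    funext t
    rcases lt_trichotomy t K with h | h | h
    · simp [h, Nat.lt_succ_of_lt h]
    · subst h
      simp [Fin.last]
    · have h2 : ¬ t < K := by omega
      have h3 : ¬ t < K + 1 := by omega
      simp [h2, h3, Function.update_of_ne (show t ≠ K by omega)]


open Classical in
/-- Theorem 2 of the paper. If `f` is not identically zero, `|V_i| ≤ p` for
every `1 ≤ i ≤ n` (Assumption 1), and `rank F_{i,y} ≤ r` for every such `i` and every row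
configuration `y` (Assumption 2), then `f`, viewed as a function of its `n²` pixels in
row-major order, admits an exact tensor train representation with bond dimensions
`l 0 = l (n²) = 1` and `l k ≤ p * r` for `1 ≤ k ≤ n² - 1`. -/
theorem exists_tensorTrain_of_assumptions (n : ℕ) (hn : 1 ≤ n)
    (f : (Fin n × Fin n → Bool) → ℝ) (hf : f ≠ 0) (p r : ℕ)
    (hp : ∀ i (h1 : 1 ≤ i) (h2 : i ≤ n),
      (Finset.univ.filter (fun y : Fin n → Bool =>
          ∃ x : Fin n × Fin n → Bool, f x ≠ 0 ∧
            ∀ c : Fin n, x (⟨i - 1, by omega⟩, c) = y c)).card ≤ p)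
    (hr : ∀ i (h1 : 1 ≤ i) (h2 : i ≤ n) (y : Fin n → Bool), (Frow n f i y).rank ≤ r) :
    ∃ l : ℕ → ℕ, l 0 = 1 ∧ l (n * n) = 1 ∧
      (∀ k, 1 ≤ k → k ≤ n * n - 1 → l k ≤ p * r) ∧
      ∃ M : (k : ℕ) → Bool → Matrix (Fin (l k)) (Fin (l (k + 1))) ℝ,
        ∀ x : Fin n × Fin n → Bool,
          ttProd l M (n * n) (rowMajor n x) = Matrix.of fun _ _ => f x := by
  set G : (ℕ → Bool) → ℝ := fun z => f (toImage n z) with hG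
  have hN : 0 < n * n := Nat.mul_pos hn hn
  have hfam : ∀ k, ∃ (m : ℕ) (B : Fin m → (ℕ → Bool) → ℝ),
      (k = 0 → m = 1 ∧ ∀ i, B i = G) ∧ (k = n * n → m = 1 ∧ ∀ i, B i = 1) ∧
      (1 ≤ k → k ≤ n * n - 1 → m ≤ p * r) ∧
      (k < n * n → ∀ i, B i ∈ cutSpace G k) ∧
      (k ≤ n * n → cutSpace G k ≤ Submodule.span ℝ (Set.range B)) := by
    intro k
    rcases Nat.eq_zero_or_pos k with hk | hk
    · subst hk
      have h0 : ∀ a b : ℕ → Bool, joinAt 0 a b = b := fun a b => by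
        funext t
        simp [joinAt]
      refine ⟨1, fun _ => G, by simp, by omega, by omega, fun _ _ => ?_, fun _ => ?_⟩
      · exact Submodule.subset_span ⟨fun _ => false, by funext b; simp only [h0]⟩
      · refine Submodule.span_le.2 ?_
        rintro _ ⟨a, rfl⟩
        exact Submodule.subset_span ⟨0, by funext b; simp only [h0]⟩
    rcases lt_trichotomy k (n * n) with hkN | hkN | hkN
    · have hi : k / n < n := Nat.div_lt_of_lt_mul hkN
      have hdm := Nat.div_add_mod k n
      have hml := Nat.mod_lt k (show n > 0 by omega)
      obtain ⟨hfd, hle⟩ := finrank_cutSpace_le n f k (k / n + 1) p r (Nat.le_add_left 1 _)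
        (by rw [Nat.add_sub_cancel, mul_comm]; omega)
        (by rw [add_mul, mul_comm]; omega) _
        (fun z hz => by
          simp only [Finset.mem_filter, Finset.mem_univ, true_and]
          exact ⟨toImage n z, hz, fun c => rfl⟩)
        (hp (k / n + 1) (Nat.le_add_left 1 _) hi) (hr (k / n + 1) (Nat.le_add_left 1 _) hi)
      refine ⟨_, fun j => (Module.finBasis ℝ (cutSpace G k) j : (ℕ → Bool) → ℝ), by omega,
        by omega, fun _ _ => hle, fun _ j => Subtype.property _, fun _ => ?_⟩
      have hspan := congrArg (Submodule.map (cutSpace G k).subtype)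
        (Module.finBasis ℝ (cutSpace G k)).span_eq
      rw [Submodule.map_span, ← Set.range_comp, Submodule.map_top, Submodule.range_subtype]
        at hspan
      exact hspan.ge
    · refine ⟨1, fun _ => 1, by omega, by simp, by omega, by omega, fun _ => ?_⟩
      refine Submodule.span_le.2 ?_
      rintro _ ⟨a, rfl⟩
      -- all pixels are fixed by the cut, so the generators are constant functions
      have hconst : (fun b => G (joinAt k a b)) = G a • (1 : (ℕ → Bool) → ℝ) := by
        funext b
        simp only [hG, Pi.smul_apply, Pi.one_apply, smul_eq_mul, mul_one]
        congr 1
        funext q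
        have hq : (q.1 : ℕ) * n + q.2 < k := by
          have := Nat.mul_le_mul_right n (show (q.1 : ℕ) + 1 ≤ n from q.1.isLt)
          have := q.2.isLt
          rw [add_mul] at *
          omega
        simp [toImage, joinAt, hq]
      change (fun b => G (joinAt k a b)) ∈ _
      rw [hconst]
      exact Submodule.smul_mem _ _ (Submodule.subset_span ⟨0, rfl⟩)
    · exact ⟨0, fun _ => 0, by omega, by omega, by omega, by omega, by omega⟩
  choose l B hB0 hBN hBle hBmem hBspan using hfam
  have hex : ∀ k c, ∃ A : Matrix (Fin (l k)) (Fin (l (k + 1))) ℝ,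
      k < n * n → ∀ i, ∑ j, A i j • B (k + 1) j = fixBit k c (B k i) := by
    intro k c
    by_cases hk : k < n * n
    · have := fun i => (Submodule.mem_span_range_iff_exists_fun ℝ).1
        (hBspan (k + 1) hk (fixBit_mem_cutSpace G k c (hBmem k hk i)))
      choose A hA using this
      exact ⟨A, fun _ => hA⟩
    · exact ⟨0, fun h => absurd h hk⟩
  choose M hM using hex
  refine ⟨l, (hB0 0 rfl).1, (hBN _ rfl).1, hBle, M, fun x => ?_⟩
  ext i j
  have hsum := sum_ttProd_mul G (n * n) l B (hB0 0 rfl).2 M hM (n * n) le_rfl (rowMajor n x) i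
    fun _ => false
  have : Subsingleton (Fin (l (n * n))) := by
    rw [(hBN _ rfl).1]
    infer_instance
  rw [Fintype.sum_subsingleton _ j, (hBN _ rfl).2 j, Pi.one_apply, mul_one] at hsum
  rw [hsum, Matrix.of_apply]
  change f (toImage n _) = f x
  congr 1
  funext q
  obtain ⟨s, c⟩ := q
  have hc := c.isLt
  have hq : (s : ℕ) * n + c < n * n := by
    have := Nat.mul_le_mul_right n (show (s : ℕ) + 1 ≤ n from s.isLt)
    rw [add_mul] at this
    omega
  have hdiv : ((s : ℕ) * n + c) / n = s := by
    rw [mul_comm, Nat.mul_add_div (by omega), Nat.div_eq_of_lt hc, add_zero]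
  have hmod : ((s : ℕ) * n + c) % n = c := by
    rw [mul_comm, Nat.mul_add_mod, Nat.mod_eq_of_lt hc]
  simp [toImage, rowMajor, hq, hdiv, hmod]
end

section
/- Let m ≥ 1 and let f : (Fin (2^m) → Bool) → ℝ be not identically zero. For 0 ≤ i ≤ m and 0 ≤ j < 2^{m−i} let I_{i,j} = {j·2^i, j·2^i + 1, …, (j+1)·2^i − 1} be the j-th dyadic interval at level i, and let r_{i,j} be the rank over ℝ of the unfolding matrix of f whose rows are indexed by configurations of the coordinates in I_{i,j} and whose columns are indexed by configurations of the remaining coordinates (so r_{m,0} = 1). Then there exist, for every node (i,j) and every α : Fin r_{i,j}, functions φ_{i,j,α} : ((I_{i,j} → Bool) → ℝ), and for every node with i ≥ 1 coefficient tensors c_{i,j} : Fin r_{i,j} → Fin r_{i−1,2j} → Fin r_{i−1,2j+1} → ℝ, such that: (1) for every i ≥ 1, j, α, and configuration x : I_{i,j} → Bool, φ_{i,j,α}(x) = Σ_{β, γ} c_{i,j}(α, β, γ) · φ_{i−1,2j,β}(x restricted to I_{i−1,2j}) · φ_{i−1,2j+1,γ}(x restricted to I_{i−1,2j+1}); and (2)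 φ_{m,0,0} = f. (Exact hierarchical Tucker / tree tensor network representation with node ranks equal to the unfolding ranks.) -/
/-!
The functions at a node `(i, j)` are taken to be a basis of the column space of the unfolding
along `I_{i,j}`; its dimension is the rank, so there are exactly as many channels as prescribed.
At the root the column space is the line spanned by `f`, and the basis is chosen to be `f` itself.

The column spaces are nested: fixing the right (left) half of the variables in a
column of the unfolding at `(i + 1, j)` yields a column of the unfolding at `(i, 2j)`
(resp. `(i, 2j + 1)`), see `slice_left_mem` and `slice_right_mem`. A function `h x y` of
two groups of variables whose slices `h · y` all lie in `span φ` and whose slices `h x ·` all lie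
in `span ψ` is a bilinear combination of the `φ β` and `ψ γ` (`exists_bilinear_coeff`), because
coordinates with respect to `φ` can be computed by a linear map defined on all functions, so they
are linear combinations of point evaluations `h x' y`, which lie in `span ψ` as functions of `y`.
-/


/-- Assemble a configuration of all `2^N` variables from a configuration `u` of the dyadic
interval `I_{ℓ,j} = {j·2^ℓ, …, (j+1)·2^ℓ − 1}` (in local coordinates) and a configuration `v`
of the remaining coordinates. -/
def assembleDy (N ℓ j : ℕ) (u : Fin (2 ^ ℓ) → Bool)
    (v : {t : Fin (2 ^ N) // (t : ℕ) < j * 2 ^ ℓ ∨ (j + 1) * 2 ^ ℓ ≤ (t : ℕ)} → Bool) :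
    Fin (2 ^ N) → Bool := fun t =>
  if h : j * 2 ^ ℓ ≤ (t : ℕ) ∧ (t : ℕ) < (j + 1) * 2 ^ ℓ then
    u ⟨(t : ℕ) - j * 2 ^ ℓ, by
      obtain ⟨h1, h2⟩ := h; rw [add_mul, one_mul] at h2; omega⟩
  else v ⟨t, by omega⟩

/-- The unfolding matrix of `g` along the dyadic interval `I_{ℓ,j}` (rows: configurations of
the coordinates in `I_{ℓ,j}`; columns: configurations of the remaining coordinates; entry:
`g` of the assembled configuration). -/
def dyUnfold (N : ℕ) (g : (Fin (2 ^ N) → Bool) → ℝ) (ℓ j : ℕ) :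
    Matrix (Fin (2 ^ ℓ) → Bool)
      ({t : Fin (2 ^ N) // (t : ℕ) < j * 2 ^ ℓ ∨ (j + 1) * 2 ^ ℓ ≤ (t : ℕ)} → Bool) ℝ :=
  Matrix.of fun u v => g (assembleDy N ℓ j u v)

/-- Coordinates with respect to a finite spanning family can be chosen linearly, by a map
defined on the whole ambient space. -/
lemma exists_linear_coord {X ι : Type*} [Fintype ι] (φ : ι → X → ℝ) :
    ∃ L : (X → ℝ) →ₗ[ℝ] (ι → ℝ),
      ∀ g ∈ Submodule.span ℝ (Set.range φ), g = ∑ β, L g β • φ β := by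
  let T := Fintype.linearCombination ℝ φ
  obtain ⟨R, hR⟩ := T.rangeRestrict.exists_rightInverse_of_surjective
    (LinearMap.range_eq_top.2 T.surjective_rangeRestrict)
  obtain ⟨L, hL⟩ := LinearMap.exists_extend R
  refine ⟨L, fun g hg => ?_⟩
  rw [← Fintype.range_linearCombination] at hg
  have h1 : L g = R ⟨g, hg⟩ := LinearMap.congr_fun hL ⟨g, hg⟩
  have h2 := congrArg Subtype.val (LinearMap.congr_fun hR ⟨g, hg⟩)
  rw [h1]
  exact h2.symm

/-- A function of two variables whose slices lie in `span φ` and `span ψ` is a bilinear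
combination of `φ` and `ψ`. -/
lemma exists_bilinear_coeff {X Y ι κ : Type*} [Fintype X] [Fintype ι] [Fintype κ]
    (φ : ι → X → ℝ) (ψ : κ → Y → ℝ) (h : X → Y → ℝ)
    (hφ : ∀ y, (fun x => h x y) ∈ Submodule.span ℝ (Set.range φ))
    (hψ : ∀ x, h x ∈ Submodule.span ℝ (Set.range ψ)) :
    ∃ c : ι → κ → ℝ, ∀ x y, h x y = ∑ β, ∑ γ, c β γ * φ β x * ψ γ y := by
  classical
  obtain ⟨L, hL⟩ := exists_linear_coord φ
  obtain ⟨M, hM⟩ := exists_linear_coord ψ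
  refine ⟨fun β γ => ∑ x', L (Pi.single x' 1) β * M (h x') γ, fun x y => ?_⟩
  have h1 := congrFun (hL _ (hφ y)) x
  have h2 : ∀ x', h x' y = ∑ γ, M (h x') γ * ψ γ y := fun x' => by
    have := congrFun (hM _ (hψ x')) y
    simpa [Finset.sum_apply] using this
  have h3 : ∀ β, L (fun x => h x y) β = ∑ x', h x' y * L (Pi.single x' 1) β := fun β => by
    rw [LinearMap.pi_apply_eq_sum_univ L (fun x => h x y)]
    simp only [Finset.sum_apply, Pi.smul_apply, smul_eq_mul]
    refine Finset.sum_congr rfl fun x' _ => ?_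
    have hs : (fun z => if x' = z then (1 : ℝ) else 0) = Pi.single x' 1 := by
      ext z
      simp [Pi.single_apply, eq_comm]
    rw [hs]
  simp only [Finset.sum_apply, Pi.smul_apply, smul_eq_mul] at h1
  rw [h1]
  refine Finset.sum_congr rfl fun β _ => ?_
  rw [h3]
  simp_rw [Finset.sum_mul]
  rw [Finset.sum_comm]
  refine Finset.sum_congr rfl fun x' _ => ?_
  rw [h2 x', Finset.sum_mul, Finset.sum_mul]
  exact Finset.sum_congr rfl fun γ _ => by ring

/-- Concatenation of configurations of the left and right halves of a dyadic interval. -/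
def joinHalves (i : ℕ) (x y : Fin (2 ^ i) → Bool) : Fin (2 ^ (i + 1)) → Bool := fun t =>
  if h : (t : ℕ) < 2 ^ i then x ⟨t, h⟩
  else y ⟨(t : ℕ) - 2 ^ i, by have h1 := t.isLt; have h2 := pow_succ 2 i; omega⟩

/-- The column space of the unfolding of `f` along `I_{i,j}`. -/
def colSpace (m : ℕ) (f : (Fin (2 ^ m) → Bool) → ℝ) (i j : ℕ) :
    Submodule ℝ ((Fin (2 ^ i) → Bool) → ℝ) :=
  Submodule.span ℝ (Set.range (dyUnfold m f i j).col)

lemma finrank_colSpace (m : ℕ) (f : (Fin (2 ^ m) → Bool) → ℝ) (i j : ℕ) :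
    Module.finrank ℝ (colSpace m f i j) = (dyUnfold m f i j).rank :=
  (Matrix.rank_eq_finrank_span_cols _).symm

lemma slice_left_mem (m : ℕ) (f : (Fin (2 ^ m) → Bool) → ℝ) (i j : ℕ)
    (y : Fin (2 ^ i) → Bool) {h : (Fin (2 ^ (i + 1)) → Bool) → ℝ}
    (hh : h ∈ colSpace m f (i + 1) j) :
    (fun x => h (joinHalves i x y)) ∈ colSpace m f i (2 * j) := by
  suffices H : colSpace m f (i + 1) j ≤
      (colSpace m f i (2 * j)).comap (LinearMap.funLeft ℝ ℝ fun x => joinHalves i x y) from H hh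
  refine Submodule.span_le.2 ?_
  rintro _ ⟨v, rfl⟩
  -- Only coordinates outside `I_{i,2j}` are kept, so the left half of the joined configuration
  -- is arbitrary.
  refine Submodule.subset_span
    ⟨fun t => assembleDy m (i + 1) j (joinHalves i y y) v t.1, ?_⟩
  ext x
  simp only [Matrix.col, dyUnfold, Matrix.transpose_apply, Matrix.of_apply, LinearMap.funLeft_apply]
  congr 1
  ext t
  have e1 : j * 2 ^ (i + 1) = 2 * j * 2 ^ i := by ring
  have e2 : (j + 1) * 2 ^ (i + 1) = 2 * j * 2 ^ i + 2 ^ i + 2 ^ i := by ring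
  have e3 : (2 * j + 1) * 2 ^ i = 2 * j * 2 ^ i + 2 ^ i := by ring
  simp only [assembleDy, joinHalves, e1, e2, e3]
  split_ifs <;> first | rfl | (exfalso; omega)

lemma slice_right_mem (m : ℕ) (f : (Fin (2 ^ m) → Bool) → ℝ) (i j : ℕ)
    (x : Fin (2 ^ i) → Bool) {h : (Fin (2 ^ (i + 1)) → Bool) → ℝ}
    (hh : h ∈ colSpace m f (i + 1) j) :
    (fun y => h (joinHalves i x y)) ∈ colSpace m f i (2 * j + 1) := by
  suffices H : colSpace m f (i + 1) j ≤
      (colSpace m f i (2 * j + 1)).comap (LinearMap.funLeft ℝ ℝ fun y => joinHalves i x y) from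
    H hh
  refine Submodule.span_le.2 ?_
  rintro _ ⟨v, rfl⟩
  refine Submodule.subset_span
    ⟨fun t => assembleDy m (i + 1) j (joinHalves i x x) v t.1, ?_⟩
  ext y
  simp only [Matrix.col, dyUnfold, Matrix.transpose_apply, Matrix.of_apply, LinearMap.funLeft_apply]
  congr 1
  ext t
  have e1 : j * 2 ^ (i + 1) = 2 * j * 2 ^ i := by ring
  have e2 : (j + 1) * 2 ^ (i + 1) = 2 * j * 2 ^ i + 2 ^ i + 2 ^ i := by ring
  have e3 : (2 * j + 1) * 2 ^ i = 2 * j * 2 ^ i + 2 ^ i := by ring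
  have e4 : (2 * j + 1 + 1) * 2 ^ i = 2 * j * 2 ^ i + 2 ^ i + 2 ^ i := by ring
  simp only [assembleDy, joinHalves, e1, e2, e3, e4, Nat.sub_sub]
  split_ifs <;> first | rfl | (exfalso; omega)

lemma colSpace_root (m : ℕ) (f : (Fin (2 ^ m) → Bool) → ℝ) :
    colSpace m f m 0 = Submodule.span ℝ {f} := by
  have hcol : ∀ v, (dyUnfold m f m 0).col v = f := fun v => by
    ext u
    simp only [Matrix.col, dyUnfold, Matrix.transpose_apply, Matrix.of_apply]
    congr 1
    ext t
    have := t.isLt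
    simp [assembleDy]
  rw [colSpace, funext hcol, Set.range_const]

lemma rank_root_pos (m : ℕ) (f : (Fin (2 ^ m) → Bool) → ℝ) (hf : f ≠ 0) :
    0 < (dyUnfold m f m 0).rank := by
  rw [← finrank_colSpace, colSpace_root, finrank_span_singleton hf]
  exact one_pos

/-- Each node has a spanning family of its column space indexed by its channels; at the root it
can be taken to consist of `f`. The cast in the last clause is along `i = m`. -/
lemma exists_node_family (m : ℕ) (f : (Fin (2 ^ m) → Bool) → ℝ) (hf : f ≠ 0) (i j : ℕ) :
    ∃ φ : Fin ((dyUnfold m f i j).rank) → ((Fin (2 ^ i) → Bool) → ℝ),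
      Submodule.span ℝ (Set.range φ) = colSpace m f i j ∧
      ∀ h : m = i, j = 0 → ∀ α x, φ α x = f (fun t => x (t.cast (by rw [h]))) := by
  by_cases hroot : m = i ∧ j = 0
  · obtain ⟨rfl, rfl⟩ := hroot
    refine ⟨fun _ => f, ?_, fun _ _ _ _ => rfl⟩
    have : Nonempty (Fin (dyUnfold m f m 0).rank) := ⟨⟨0, rank_root_pos m f hf⟩⟩
    rw [colSpace_root, Set.range_const]
  · let b := Module.finBasisOfFinrankEq ℝ (colSpace m f i j) (finrank_colSpace m f i j)
    refine ⟨fun α => (b α : (Fin (2 ^ i) → Bool) → ℝ), ?_, fun h h' => absurd ⟨h, h'⟩ hroot⟩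
    have := congrArg (Submodule.map (colSpace m f i j).subtype) b.span_eq
    rw [Submodule.map_span, ← Set.range_comp, Submodule.map_top, Submodule.range_subtype] at this
    exact this

/-- Exact hierarchical Tucker (tree tensor network) representation with node
ranks equal to the unfolding ranks: for `f : (Fin (2^m) → Bool) → ℝ` not identically zero,
there exist functions `φ_{i,j,α}` (for each node `(i,j)` of the dyadic tree, with
`r_{i,j} = rank` of the unfolding of `f` along `I_{i,j}` many channels) and coefficient
tensors `c` such that each internal node's functions are the prescribed bilinear combinations
of those of its two children, and the root function is `f`. -/
theorem exists_hierarchicalTucker_rank_channels (m : ℕ) (hm : 1 ≤ m)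
    (f : (Fin (2 ^ m) → Bool) → ℝ) (hf : f ≠ 0) :
    ∃ (φ : (i j : ℕ) → Fin ((dyUnfold m f i j).rank) → ((Fin (2 ^ i) → Bool) → ℝ))
      (c : (i j : ℕ) → Fin ((dyUnfold m f (i + 1) j).rank) →
        Fin ((dyUnfold m f i (2 * j)).rank) → Fin ((dyUnfold m f i (2 * j + 1)).rank) → ℝ),
      (∀ (i j : ℕ) (hij : i + 1 ≤ m) (hj : j < 2 ^ (m - (i + 1)))
          (α : Fin ((dyUnfold m f (i + 1) j).rank)) (x : Fin (2 ^ (i + 1)) → Bool),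
        φ (i + 1) j α x =
          ∑ β : Fin ((dyUnfold m f i (2 * j)).rank),
            ∑ γ : Fin ((dyUnfold m f i (2 * j + 1)).rank),
              c i j α β γ *
              φ i (2 * j) β (fun t => x ⟨(t : ℕ), by
                have h1 := t.isLt; have h2 := pow_succ 2 i; omega⟩) *
              φ i (2 * j + 1) γ (fun t => x ⟨2 ^ i + (t : ℕ), by
                have h1 := t.isLt; have h2 := pow_succ 2 i; omega⟩)) ∧
      ∃ h0 : 0 < (dyUnfold m f m 0).rank, φ m 0 ⟨0, h0⟩ = f := by
  choose φ hspan hroot using exists_node_family m f hf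
  have key : ∀ i j α, ∃ c : Fin ((dyUnfold m f i (2 * j)).rank) →
      Fin ((dyUnfold m f i (2 * j + 1)).rank) → ℝ, ∀ x y,
      φ (i + 1) j α (joinHalves i x y) =
        ∑ β, ∑ γ, c β γ * φ i (2 * j) β x * φ i (2 * j + 1) γ y := fun i j α => by
    have hα : φ (i + 1) j α ∈ colSpace m f (i + 1) j := by
      rw [← hspan]; exact Submodule.subset_span ⟨α, rfl⟩
    refine exists_bilinear_coeff _ _ (fun x y => φ (i + 1) j α (joinHalves i x y)) ?_ ?_
    · intro y
      rw [hspan]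
      exact slice_left_mem m f i j y hα
    · intro x
      rw [hspan]
      exact slice_right_mem m f i j x hα
  choose c hc using key
  refine ⟨φ, c, fun i j _ _ α x => ?_, rank_root_pos m f hf, ?_⟩
  · rw [← hc]
    congr 1
    ext t
    simp only [joinHalves]
    split_ifs with h
    · rfl
    · exact congrArg x (Fin.ext (Nat.add_sub_of_le (not_lt.1 h)).symm)
  · ext x
    exact hroot m 0 rfl rfl _ x
end
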